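/- Let Ũ^{≥0} be the associative unital R-algebra presented by generators ẽ_n (n ≥ 0) and relations ẽ_{m+1}ẽ_n − ẽ_n ẽ_{m+1} − ẽ_m ẽ_{n+1} + ẽ_{n+1} ẽ_m = ℏ(ẽ_m ẽ_n + ẽ_n ẽ_m) for all m, n ≥ 0. Then the R-algebra morphism Ũ^{≥0} → U determined by ẽ_n ↦ e_n is injective, and its image is the subalgebra U^{≥0}; in other words, these relations are defining relations for U^{≥0}. -/

import Mathlib

open scoped TensorProduct

noncomputable section

/-- The base ring `R = ℂ[[ℏ]]`. -/
abbrev R : Type := PowerSeries ℂ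

/-- The formal variable `ℏ ∈ ℂ[[ℏ]]`. -/
def hbar : R := PowerSeries.X

/-- The generators `e_n` of the free algebra. -/
def E (n : ℤ) : FreeAlgebra R ℤ := FreeAlgebra.ι R n

/-- The defining relations of `U_ℏ𝔫₊`:
`e_{m+1}e_n − e_n e_{m+1} − e_m e_{n+1} + e_{n+1}e_m = ℏ(e_m e_n + e_n e_m)`. -/
inductive ERel : FreeAlgebra R ℤ → FreeAlgebra R ℤ → Prop
  | current (m n : ℤ) :
      ERel (E (m + 1) * E n - E n * E (m + 1) - E m * E (n + 1) + E (n + 1) * E m)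
        (hbar • (E m * E n + E n * E m))

/-- `U = U_ℏ𝔫₊`, the quotient of the free `R`-algebra on the `e_n`, `n ∈ ℤ`,
by the two-sided ideal generated by the defining relations. -/
abbrev U : Type := RingQuot ERel

/-- The image of `e_n` in `U`. -/
def e (n : ℤ) : U := RingQuot.mkAlgHom R ERel (E n)

/-- `U^{≥0}`, the `R`-subalgebra of `U` generated by the `e_n` with `n ≥ 0`. -/
def Uge : Subalgebra R U := Algebra.adjoin R (Set.range fun n : ℕ => e (n : ℤ))

/-- `U^{<0}`, the `R`-subalgebra of `U` generated by the `e_n` with `n < 0`. -/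
def Ult : Subalgebra R U := Algebra.adjoin R {x : U | ∃ n : ℤ, n < 0 ∧ x = e n}

/-- The generators `ẽ_n`, `n ≥ 0`, of the free algebra on nonnegative modes. -/
def Et (n : ℕ) : FreeAlgebra R ℕ := FreeAlgebra.ι R n

/-- The defining relations of `Ũ^{≥0}`:
`ẽ_{m+1}ẽ_n − ẽ_n ẽ_{m+1} − ẽ_m ẽ_{n+1} + ẽ_{n+1}ẽ_m = ℏ(ẽ_m ẽ_n + ẽ_n ẽ_m)`, `m, n ≥ 0`. -/
inductive ERelT : FreeAlgebra R ℕ → FreeAlgebra R ℕ → Prop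
  | current (m n : ℕ) :
      ERelT (Et (m + 1) * Et n - Et n * Et (m + 1) - Et m * Et (n + 1) + Et (n + 1) * Et m)
        (hbar • (Et m * Et n + Et n * Et m))

/-- `Ũ^{≥0}`, the `R`-algebra presented by the generators `ẽ_n`, `n ≥ 0`,
and the above relations. -/
abbrev Ut : Type := RingQuot ERelT

/-- The image of `ẽ_n` in `Ũ^{≥0}`. -/
def et (n : ℕ) : Ut := RingQuot.mkAlgHom R ERelT (Et n)


section Words
variable {S : Type*} [CommRing S] {X : Type*}

theorem basis_apply_word (w : FreeMonoid X) :
    FreeAlgebra.basisFreeMonoid S X w = (w.toList.map (FreeAlgebra.ι S)).prod := by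
  simp [FreeAlgebra.basisFreeMonoid, FreeAlgebra.equivMonoidAlgebraFreeMonoid,
    FreeMonoid.lift_apply, MonoidAlgebra.ofCoeff_single]

theorem span_words :
    Submodule.span S (Set.range fun l : List X => (l.map (FreeAlgebra.ι S)).prod) = ⊤ := by
  rw [← (FreeAlgebra.basisFreeMonoid S X).span_eq]
  congr 1
  ext x
  constructor
  · rintro ⟨l, rfl⟩
    exact ⟨FreeMonoid.ofList l, by simp [basis_apply_word]⟩
  · rintro ⟨w, rfl⟩
    exact ⟨w.toList, by simp [basis_apply_word]⟩
end Words

section Laurent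
variable (S : Type*) [CommRing S] (k : ℕ)

/-- Laurent polynomials in `k` variables. -/
abbrev Lau : Type _ := AddMonoidAlgebra S (Fin k → ℤ)

/-- Monomials. -/
def mon (g : Fin k → ℤ) : Lau S k := AddMonoidAlgebra.single g 1

/-- Variables. -/
def zv (i : Fin k) : Lau S k := mon S k (Pi.single i 1)

/-- Action of permutations on exponents. -/
def permHom (σ : Equiv.Perm (Fin k)) : (Fin k → ℤ) →+ (Fin k → ℤ) where
  toFun g := fun i => g (σ.symm i)
  map_zero' := rfl
  map_add' _ _ := rfl

/-- Action of permutations on Laurent polynomials. -/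
def act (σ : Equiv.Perm (Fin k)) : Lau S k →ₐ[S] Lau S k :=
  AddMonoidAlgebra.mapDomainAlgHom S S (permHom k σ)

/-- Antisymmetrisation. -/
def asym : Lau S k →ₗ[S] Lau S k :=
  ∑ σ : Equiv.Perm (Fin k), ((Equiv.Perm.sign σ : ℤˣ) : ℤ) • (act S k σ).toLinearMap

variable {S k}

theorem mon_mul (g g' : Fin k → ℤ) : mon S k g * mon S k g' = mon S k (g + g') := by
  simp [mon, AddMonoidAlgebra.single_mul_single]

theorem act_mon (σ : Equiv.Perm (Fin k)) (g : Fin k → ℤ) :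
    act S k σ (mon S k g) = mon S k (fun i => g (σ.symm i)) := by
  simp [act, mon, permHom]

theorem act_mul (σ τ : Equiv.Perm (Fin k)) (T : Lau S k) :
    act S k (σ * τ) T = act S k σ (act S k τ T) := by
  have : act S k (σ * τ) = (act S k σ).comp (act S k τ) := by
    unfold act
    rw [← AddMonoidAlgebra.mapDomainAlgHom_comp]
    rfl
  rw [this]; rfl

theorem act_single (σ : Equiv.Perm (Fin k)) (i : Fin k) (n : ℤ) :
    act S k σ (mon S k (Pi.single i n)) = mon S k (Pi.single (σ i) n) := by
  rw [act_mon]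
  congr 1
  ext j
  simp [Pi.single_apply, Equiv.symm_apply_eq]

theorem act_zv (σ : Equiv.Perm (Fin k)) (i : Fin k) :
    act S k σ (zv S k i) = zv S k (σ i) := act_single σ i 1

theorem asym_apply (T : Lau S k) : asym S k T =
    ∑ σ : Equiv.Perm (Fin k), ((Equiv.Perm.sign σ : ℤˣ) : ℤ) • act S k σ T := by
  simp [asym]

theorem asym_eq_zero [IsDomain S] [CharZero S] {i j : Fin k} (hij : i ≠ j) (T : Lau S k)
    (hT : act S k (Equiv.swap i j) T = T) : asym S k T = 0 := by
  have h : asym S k T = - asym S k T := by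
    conv_lhs => rw [asym_apply, ← Equiv.sum_comp (Equiv.mulRight (Equiv.swap i j))]
    rw [asym_apply, ← Finset.sum_neg_distrib]
    refine Finset.sum_congr rfl fun σ _ => ?_
    simp [act_mul, hT, Equiv.Perm.sign_swap hij]
  have h2 : (2 : S) • asym S k T = 0 := by
    rw [two_smul]; nth_rw 1 [h]; simp
  ext g
  have h3 := congrArg (fun x => AddMonoidAlgebra.coeff x g) h2
  simpa using h3

/-- The product `∏_{a<b} (z_a - z_b + h)`. -/
def PP (h : S) : Lau S k :=
  ∏ p : Fin k × Fin k with p.1 < p.2, (zv S k p.1 - zv S k p.2 + algebraMap S _ h)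

/-- The same product with one factor removed. -/
def QQ (h : S) (i j : Fin k) : Lau S k :=
  ∏ p : Fin k × Fin k with p.1 < p.2 ∧ p ≠ (i, j), (zv S k p.1 - zv S k p.2 + algebraMap S _ h)

theorem PP_eq (h : S) (i j : Fin k) (hij : i < j) :
    PP (k := k) h = (zv S k i - zv S k j + algebraMap S _ h) * QQ h i j := by
  unfold PP QQ
  rw [← Finset.mul_prod_erase _ _ (a := (i, j)) (by simpa using hij)]
  congr 1
  refine Finset.prod_congr ?_ fun _ _ => rfl
  ext p
  simp [and_comm]

theorem swap_pair (i j a b : Fin k) (hij : (j : ℕ) = i + 1) (hab : a < b)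
    (hne : (a, b) ≠ (i, j)) :
    Equiv.swap i j a < Equiv.swap i j b ∧ (Equiv.swap i j a, Equiv.swap i j b) ≠ (i, j) := by
  simp only [Equiv.swap_apply_def, ne_eq, Prod.mk.injEq, Fin.ext_iff, Fin.lt_def] at *
  split_ifs <;> omega

theorem act_QQ (h : S) (i j : Fin k) (hij : (j : ℕ) = i + 1) :
    act S k (Equiv.swap i j) (QQ h i j) = QQ h i j := by
  unfold QQ
  rw [map_prod]
  refine Finset.prod_nbij' (fun p => (Equiv.swap i j p.1, Equiv.swap i j p.2))
    (fun p => (Equiv.swap i j p.1, Equiv.swap i j p.2)) ?_ ?_ ?_ ?_ ?_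
  · rintro ⟨a, b⟩ hp
    simp only [Finset.mem_filter, Finset.mem_univ, true_and] at hp ⊢
    exact swap_pair i j a b hij hp.1 hp.2
  · rintro ⟨a, b⟩ hp
    simp only [Finset.mem_filter, Finset.mem_univ, true_and] at hp ⊢
    exact swap_pair i j a b hij hp.1 hp.2
  · intro p _; simp
  · intro p _; simp
  · intro p _; simp only [map_add, map_sub, act_zv, AlgHom.commutes]

/-- Exponent vector of a list. -/
def expo (k : ℕ) (l : List ℤ) : Fin k → ℤ := fun i => l.getD i 0

theorem expo_split (u v : List ℤ) (p q : ℤ) (i j : Fin k) (hi : (i : ℕ) = u.length)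
    (hj : (j : ℕ) = u.length + 1) :
    expo k (u ++ [p, q] ++ v) = expo k (u ++ [0, 0] ++ v) + Pi.single i p + Pi.single j q := by
  ext a
  simp only [expo, Pi.add_apply, Pi.single_apply, Fin.ext_iff, hi, hj]
  rcases lt_trichotomy (a : ℕ) u.length with h | h | h
  · rw [if_neg (by omega), if_neg (by omega)]
    simp [List.getD_eq_getElem?_getD, List.getElem?_append, h]
  · simp [List.getD_eq_getElem?_getD, h]
  · by_cases h' : (a : ℕ) = u.length + 1
    · simp [List.getD_eq_getElem?_getD, h']
    · obtain ⟨c, hc⟩ : ∃ c, (a : ℕ) = u.length + (c + 2) := ⟨a - u.length - 2, by omega⟩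
      simp [List.getD_eq_getElem?_getD, List.getElem?_append, hc]

theorem asym_rel [IsDomain S] [CharZero S] (h : S) (u v : List ℤ) (m n : ℤ)
    (hk : u.length + 2 + v.length = k) :
    asym S k ((mon S k (expo k (u ++ [m + 1, n] ++ v)) - mon S k (expo k (u ++ [n, m + 1] ++ v))
      - mon S k (expo k (u ++ [m, n + 1] ++ v)) + mon S k (expo k (u ++ [n + 1, m] ++ v))
      - h • (mon S k (expo k (u ++ [m, n] ++ v)) + mon S k (expo k (u ++ [n, m] ++ v))))
      * PP h) = 0 := by
  obtain ⟨i, hi⟩ : ∃ i : Fin k, (i : ℕ) = u.length := ⟨⟨u.length, by omega⟩, rfl⟩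
  obtain ⟨j, hj⟩ : ∃ j : Fin k, (j : ℕ) = u.length + 1 := ⟨⟨u.length + 1, by omega⟩, rfl⟩
  have hij : i ≠ j := fun H => by rw [H] at hi; omega
  have hlt : i < j := by rw [Fin.lt_def]; omega
  have key : ∀ p q, mon S k (expo k (u ++ [p, q] ++ v)) =
      mon S k (expo k (u ++ [0, 0] ++ v)) * mon S k (Pi.single i p) * mon S k (Pi.single j q) := by
    intro p q
    rw [expo_split u v p q i j hi hj, mon_mul, mon_mul]
  have hs : ∀ (a : Fin k) (p : ℤ), mon S k (Pi.single a (p + 1)) =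
      mon S k (Pi.single a p) * zv S k a := by
    intro a p
    rw [zv, mon_mul, Pi.single_add]
  have hZ : act S k (Equiv.swap i j) (mon S k (expo k (u ++ [0, 0] ++ v))) =
      mon S k (expo k (u ++ [0, 0] ++ v)) := by
    rw [act_mon]
    congr 1
    have e0 : expo k (u ++ [0, 0] ++ v) i = 0 := by
      simp [expo, List.getD_eq_getElem?_getD, hi]
    have e1 : expo k (u ++ [0, 0] ++ v) j = 0 := by
      simp [expo, List.getD_eq_getElem?_getD, hj]
    ext a
    simp only [Equiv.symm_swap, Equiv.swap_apply_def]
    split_ifs with h1 h2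
    · rw [h1, e0, e1]
    · rw [h2, e0, e1]
    · rfl
  generalize mon S k (expo k (u ++ [0, 0] ++ v)) = Z at key hZ
  simp only [key, hs, PP_eq h i j hlt, Algebra.smul_def]
  refine asym_eq_zero hij _ ?_
  simp only [map_mul, map_sub, map_add, hZ, act_QQ h i j (by omega), act_single, act_zv,
    Equiv.swap_apply_left, Equiv.swap_apply_right, AlgHom.commutes]
  ring

end Laurent

section ModH
variable {S : Type*} [CommRing S] {k : ℕ}

theorem PP_zero_eq : PP (k := k) (0 : S) = (Matrix.vandermonde fun i => - zv S k i).det := by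
  rw [Matrix.det_vandermonde, PP, Finset.prod_filter, ← Finset.univ_product_univ,
    Finset.prod_product]
  refine Finset.prod_congr rfl fun i _ => ?_
  rw [← Finset.prod_filter, Finset.filter_lt_eq_Ioi]
  refine Finset.prod_congr rfl fun j _ => ?_
  simp only [map_zero]
  ring

theorem act_PP_zero (σ : Equiv.Perm (Fin k)) :
    act S k σ (PP 0) = ((Equiv.Perm.sign σ : ℤˣ) : ℤ) • PP 0 := by
  rw [PP_zero_eq, AlgHom.map_det, zsmul_eq_mul, ← Matrix.det_permute]
  congr 1
  ext1 i j
  simp [Matrix.vandermonde, act_zv]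

theorem PP_zero_ne_zero [IsDomain S] : PP (k := k) (0 : S) ≠ 0 := by
  have : IsDomain (Lau S k) := NoZeroDivisors.to_isDomain _
  rw [PP_zero_eq, Matrix.det_vandermonde_ne_zero_iff]
  intro i j hij
  simp only [neg_inj, zv, mon] at hij
  have h2 := AddMonoidAlgebra.single_left_injective (one_ne_zero) hij
  by_contra hne
  have h3 := congrFun h2 i
  simp [hne] at h3

theorem asym_mul_PP_zero (T : Lau S k) :
    asym S k (T * PP 0) = (∑ σ : Equiv.Perm (Fin k), act S k σ T) * PP 0 := by
  rw [asym_apply, Finset.sum_mul]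
  refine Finset.sum_congr rfl fun σ _ => ?_
  rw [map_mul, act_PP_zero, mul_smul_comm, smul_smul, ← Units.val_mul, Int.units_mul_self]
  simp

variable {S' : Type*} [CommRing S'] (f : S →+* S')

/-- Change of coefficients. -/
def cc (k : ℕ) : Lau S k →+* Lau S' k := AddMonoidAlgebra.mapRingHom (Fin k → ℤ) f

theorem cc_mon (g : Fin k → ℤ) : cc f k (mon S k g) = mon S' k g := by
  simp [cc, mon]

theorem cc_smul (r : S) (T : Lau S k) : cc f k (r • T) = f r • cc f k T := by
  ext g
  simp [cc]

theorem cc_act (σ : Equiv.Perm (Fin k)) (T : Lau S k) :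
    cc f k (act S k σ T) = act S' k σ (cc f k T) := by
  have := AddMonoidAlgebra.mapRingHom_comp_mapDomainRingHom f (permHom k σ)
  exact congrArg (fun g : Lau S k →+* Lau S' k => g T) this

theorem cc_asym (T : Lau S k) : cc f k (asym S k T) = asym S' k (cc f k T) := by
  simp only [asym_apply, map_sum, map_zsmul, cc_act]

theorem cc_algebraMap (r : S) :
    cc f k (algebraMap S (Lau S k) r) = algebraMap S' (Lau S' k) (f r) := by
  simp [cc]

theorem cc_PP (h : S) : cc f k (PP h) = PP (f h) := by
  simp only [PP, map_prod, map_add, map_sub, zv, cc_mon, cc_algebraMap]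

/-- The list of integers attached to a multiset of naturals. -/
def exm (m : Multiset ℕ) : List ℤ := m.toList.map (fun n : ℕ => (n : ℤ))

theorem exm_length (m : Multiset ℕ) : (exm m).length = Multiset.card m := by
  simp [exm]

theorem map_expo (l : List ℤ) (hl : l.length = k) :
    (Finset.univ : Finset (Fin k)).val.map (expo k l) = (l : Multiset ℤ) := by
  subst hl
  have : l = List.ofFn (expo l.length l) := by
    apply List.ext_getElem
    · simp
    · intro i h1 h2
      simp [expo, h1]
  conv_rhs => rw [this]
  simp [List.ofFn_eq_map, Fin.univ_def]

theorem eq_of_perm (m m' : Multiset ℕ) (hm : Multiset.card m = k) (hm' : Multiset.card m' = k)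
    (σ : Equiv.Perm (Fin k))
    (h : (fun i => expo k (exm m) (σ.symm i)) = expo k (exm m')) : m = m' := by
  have h1 := map_expo (k := k) (exm m) (by rw [exm_length, hm])
  have h2 := map_expo (k := k) (exm m') (by rw [exm_length, hm'])
  rw [← h] at h2
  have h3 : (Finset.univ : Finset (Fin k)).val.map (fun i => expo k (exm m) (σ.symm i)) =
      (Finset.univ : Finset (Fin k)).val.map (expo k (exm m)) := by
    rw [← Function.comp_def, ← Multiset.map_map]
    congr 1
    simp
  rw [h3, h1] at h2
  unfold exm at h2
  rw [← Multiset.map_coe, ← Multiset.map_coe, Multiset.coe_toList, Multiset.coe_toList] at h2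
  exact Multiset.map_injective Nat.cast_injective h2

theorem indep_zero [IsDomain S] [CharZero S] (c : Multiset ℕ →₀ S)
    (hc : ∀ k, c.sum (fun m r => r • (if Multiset.card m = k then
      asym S k (mon S k (expo k (exm m)) * PP 0) else 0)) = 0) : c = 0 := by
  ext m₀
  set k := Multiset.card m₀ with hk
  have h := hc k
  have h1 : c.sum (fun m r => r • (if Multiset.card m = k then
      asym S k (mon S k (expo k (exm m)) * PP 0) else 0)) =
      (c.sum (fun m r => r • (if Multiset.card m = k then
        (∑ σ : Equiv.Perm (Fin k), act S k σ (mon S k (expo k (exm m)))) else 0))) * PP 0 := by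
    rw [Finsupp.sum, Finsupp.sum, Finset.sum_mul]
    refine Finset.sum_congr rfl fun m _ => ?_
    split_ifs
    · rw [asym_mul_PP_zero, smul_mul_assoc]
    · simp
  rw [h1] at h
  have h2 := (mul_eq_zero.mp h).resolve_right PP_zero_ne_zero
  have h3 := congrArg (fun x => AddMonoidAlgebra.coeff x (expo k (exm m₀))) h2
  simp only [Finsupp.sum, AddMonoidAlgebra.coeff_sum, Finsupp.coe_finsetSum,
    Finset.sum_apply, AddMonoidAlgebra.coeff_zero, Finsupp.coe_zero, Pi.zero_apply,
    AddMonoidAlgebra.coeff_smul, Finsupp.smul_apply] at h3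
  by_contra hne
  rw [Finset.sum_eq_single m₀] at h3
  · rw [if_pos hk.symm] at h3
    simp only [Finsupp.coe_zero, Pi.zero_apply, smul_eq_mul, mul_eq_zero] at h3 hne
    have h4 := h3.resolve_left hne
    simp only [AddMonoidAlgebra.coeff_sum, Finsupp.coe_finsetSum, Finset.sum_apply, act_mon] at h4
    simp only [mon, AddMonoidAlgebra.coeff_single, Finsupp.single_apply] at h4
    rw [Finset.sum_boole, Nat.cast_eq_zero, Finset.card_eq_zero] at h4
    have : (1 : Equiv.Perm (Fin k)) ∈ (∅ : Finset (Equiv.Perm (Fin k))) := by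
      rw [← h4]; simp [Equiv.Perm.one_def]
    simp at this
  · intro m _ hm
    split_ifs with hmk
    · simp only [AddMonoidAlgebra.coeff_sum, Finsupp.coe_finsetSum, Finset.sum_apply, act_mon]
      simp only [mon, AddMonoidAlgebra.coeff_single, Finsupp.single_apply]
      rw [Finset.sum_eq_zero, smul_zero]
      intro σ _
      rw [if_neg]
      intro H
      exact hm (eq_of_perm m m₀ hmk hk.symm σ H)
    · simp
  · intro hm
    simp [Finsupp.notMem_support_iff.mp hm]

end ModH

theorem indep_dvd (c : Multiset ℕ →₀ R)
    (hc : ∀ k, c.sum (fun m r => r • (if Multiset.card m = k then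
      asym R k (mon R k (expo k (exm m)) * PP hbar) else 0)) = 0) (m : Multiset ℕ) :
    hbar ∣ c m := by
  have h0 : c.mapRange (PowerSeries.constantCoeff (R := ℂ)) (map_zero _) = 0 := by
    apply indep_zero
    intro k
    have h := congrArg (cc (PowerSeries.constantCoeff (R := ℂ)) k) (hc k)
    rw [map_zero, Finsupp.sum, map_sum] at h
    rw [Finsupp.sum_mapRange_index (by simp), Finsupp.sum]
    refine Eq.trans ?_ h
    refine Finset.sum_congr rfl fun m _ => ?_
    rw [cc_smul]
    congr 1
    split_ifs
    · rw [cc_asym, RingHom.map_mul, cc_mon, cc_PP, hbar, PowerSeries.constantCoeff_X]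
    · simp
  have := DFunLike.congr_fun h0 m
  rw [hbar, PowerSeries.X_dvd_iff]
  simpa using this

theorem indep_pow (N : ℕ) : ∀ (c : Multiset ℕ →₀ R)
    (_ : ∀ k, c.sum (fun m r => r • (if Multiset.card m = k then
      asym R k (mon R k (expo k (exm m)) * PP hbar) else 0)) = 0) (m : Multiset ℕ),
    hbar ^ N ∣ c m := by
  induction N with
  | zero => intro c _ m; simp
  | succ N ih =>
    intro c hc m
    have hd := indep_dvd c hc
    choose d hd using hd
    have hX : hbar ≠ 0 := PowerSeries.X_ne_zero
    let c' : Multiset ℕ →₀ R := Finsupp.onFinset c.support d (by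
      intro a ha
      rw [Finsupp.mem_support_iff, hd a]
      exact mul_ne_zero hX ha)
    have hc' : c = hbar • c' := by
      ext1 a
      simp [c', hd a]
    have h2 := ih c' (by
      intro k
      have h := hc k
      rw [hc', Finsupp.sum_smul_index (by simp)] at h
      simp only [mul_smul] at h
      rw [← Finsupp.smul_sum] at h
      ext1
      ext1 g
      have h3 := congrArg (fun x => AddMonoidAlgebra.coeff x g) h
      simp only [AddMonoidAlgebra.coeff_smul, Finsupp.smul_apply, AddMonoidAlgebra.coeff_zero,
        Finsupp.coe_zero, Pi.zero_apply, smul_eq_mul, mul_eq_zero] at h3 ⊢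
      exact h3.resolve_left hX) m
    rw [hc', Finsupp.smul_apply, smul_eq_mul, pow_succ']
    exact mul_dvd_mul_left _ h2

theorem indep (c : Multiset ℕ →₀ R)
    (hc : ∀ k, c.sum (fun m r => r • (if Multiset.card m = k then
      asym R k (mon R k (expo k (exm m)) * PP hbar) else 0)) = 0) : c = 0 := by
  ext m N
  have := indep_pow (N + 1) c hc m
  rw [hbar, PowerSeries.X_pow_dvd_iff] at this
  simpa using this N (by omega)

/-- The word in `F` attached to a list. -/
def Ew (l : List ℤ) : FreeAlgebra R ℤ := (l.map E).prod

theorem Ew_append (u v : List ℤ) : Ew (u ++ v) = Ew u * Ew v := by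
  simp [Ew]

/-- The degree `k` part of the shuffle map, before antisymmetrisation. -/
def MM (k : ℕ) : FreeAlgebra R ℤ →ₗ[R] Lau R k :=
  (FreeAlgebra.basisFreeMonoid R ℤ).constr R
    (fun w => if w.toList.length = k then mon R k (expo k w.toList) else 0)

theorem MM_word (k : ℕ) (l : List ℤ) :
    MM k (Ew l) = if l.length = k then mon R k (expo k l) else 0 := by
  have h : Ew l = FreeAlgebra.basisFreeMonoid R ℤ (FreeMonoid.ofList l) := by
    rw [basis_apply_word]; rfl
  rw [h, MM, Module.Basis.constr_basis]
  rfl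

/-- The degree `k` part of the shuffle map. -/
def Phi (k : ℕ) : FreeAlgebra R ℤ →ₗ[R] Lau R k :=
  asym R k ∘ₗ LinearMap.mulRight R (PP hbar) ∘ₗ MM k

theorem Phi_word (k : ℕ) (l : List ℤ) :
    Phi k (Ew l) = if l.length = k then asym R k (mon R k (expo k l) * PP hbar) else 0 := by
  simp only [Phi, LinearMap.comp_apply, MM_word, LinearMap.mulRight_apply]
  split_ifs <;> simp

/-- The difference of the two sides of a relation. -/
def relE (m n : ℤ) : FreeAlgebra R ℤ :=
  (E (m + 1) * E n - E n * E (m + 1) - E m * E (n + 1) + E (n + 1) * E m) -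
    hbar • (E m * E n + E n * E m)

theorem Phi_rel_word (k : ℕ) (u v : List ℤ) (m n : ℤ) :
    Phi k (Ew u * relE m n * Ew v) = 0 := by
  have hw : ∀ p q : ℤ, Ew u * (E p * E q) * Ew v = Ew (u ++ [p, q] ++ v) := by
    intro p q
    simp [Ew, mul_assoc]
  have h : Ew u * relE m n * Ew v = Ew (u ++ [m + 1, n] ++ v) - Ew (u ++ [n, m + 1] ++ v)
      - Ew (u ++ [m, n + 1] ++ v) + Ew (u ++ [n + 1, m] ++ v)
      - hbar • (Ew (u ++ [m, n] ++ v) + Ew (u ++ [n, m] ++ v)) := by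
    simp only [relE, ← hw, mul_sub, sub_mul, mul_add, add_mul, mul_smul_comm, smul_mul_assoc,
      smul_add]
  rw [h]
  have hl : ∀ p q : ℤ, (u ++ [p, q] ++ v).length = u.length + 2 + v.length := by
    intro p q; simp; omega
  by_cases hk : u.length + 2 + v.length = k
  · have : CharZero R := charZero_of_injective_algebraMap (algebraMap ℂ R).injective
    rw [← asym_rel hbar u v m n hk]
    simp only [Phi, LinearMap.comp_apply, map_sub, map_add, map_smul, MM_word, hl, if_pos hk,
      LinearMap.mulRight_apply]
    simp only [sub_mul, add_mul, smul_mul_assoc, map_sub, map_add, map_smul]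
  · simp only [map_sub, map_add, map_smul, Phi_word, hl, if_neg hk]
    simp

theorem Phi_rel (k : ℕ) (a b : FreeAlgebra R ℤ) (m n : ℤ) :
    Phi k (a * relE m n * b) = 0 := by
  have ha : a ∈ Submodule.span R (Set.range Ew) := by
    have := span_words (S := R) (X := ℤ)
    exact this.symm ▸ Submodule.mem_top
  have hb : b ∈ Submodule.span R (Set.range Ew) := by
    have := span_words (S := R) (X := ℤ)
    exact this.symm ▸ Submodule.mem_top
  induction ha using Submodule.span_induction with
  | mem x hx =>
    obtain ⟨u, rfl⟩ := hx
    induction hb using Submodule.span_induction with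
    | mem x hx => obtain ⟨v, rfl⟩ := hx; exact Phi_rel_word k u v m n
    | zero => simp
    | add x y _ _ hx hy => rw [mul_add, map_add, hx, hy, add_zero]
    | smul r x _ hx => rw [mul_smul_comm, map_smul, hx, smul_zero]
  | zero => simp
  | add x y _ _ hx hy => rw [add_mul, add_mul, map_add, hx, hy, add_zero]
  | smul r x _ hx => rw [smul_mul_assoc, smul_mul_assoc, map_smul, hx, smul_zero]

/-- The largest ring congruence on which `Phi k` is constant. -/
def phiCon (k : ℕ) : RingCon (FreeAlgebra R ℤ) where
  r x y := ∀ a b, Phi k (a * x * b) = Phi k (a * y * b)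
  iseqv := ⟨fun _ _ _ => rfl, fun h a b => (h a b).symm, fun h h' a b => (h a b).trans (h' a b)⟩
  add' := by
    intro w x y z h h' a b
    simp only [mul_add, add_mul, map_add, h a b, h' a b]
  mul' := by
    intro w x y z h h' a b
    have h1 := h a (y * b)
    have h2 := h' (a * x) b
    simp only [mul_assoc] at h1 h2 ⊢
    rw [h1, h2]

theorem Phi_eq_zero (k : ℕ) (x : FreeAlgebra R ℤ) (hx : RingQuot.mkAlgHom R ERel x = 0) :
    Phi k x = 0 := by
  have hrel : ∀ ⦃x y⦄, ERel x y → (phiCon k).mk' x = (phiCon k).mk' y := by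
    rintro _ _ ⟨m, n⟩
    refine (RingCon.eq _).mpr ?_
    intro a b
    rw [← sub_eq_zero, ← map_sub, ← sub_mul, ← mul_sub]
    exact Phi_rel k a b m n
  let f := RingQuot.lift ⟨(phiCon k).mk', hrel⟩
  have h1 : f (RingQuot.mkRingHom ERel x) = (phiCon k).mk' x := RingQuot.lift_mkRingHom_apply _ _ _
  have h2 : RingQuot.mkRingHom ERel x = 0 := by
    rw [← RingQuot.mkAlgHom_coe R ERel]; exact hx
  rw [h2, map_zero] at h1
  have h3 : (phiCon k) x 0 := (RingCon.eq _).mp (h1.symm.trans (map_zero (phiCon k).mk').symm)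
  have h4 := h3 1 1
  simpa using h4

/-! Spanning -/

theorem rel_forward {X B : Type} [Semiring B] [Algebra R B] (f : FreeAlgebra R X →ₐ[R] B)
    (a b c d r : FreeAlgebra R X) (h : f (a - b - c + d) = f r) :
    f a + f d = f b + f c + f r := by
  rw [← h, ← map_add, ← map_add, ← map_add]
  congr 1
  abel

theorem rel_backward {X B : Type} [Semiring B] [Algebra R B] (f : FreeAlgebra R X →ₐ[R] B)
    (a b c d r : FreeAlgebra R X) (h : f a + f d = f b + f c + f r) :
    f (a - b - c + d) = f r := by
  let _ : Ring B := Algebra.semiringToRing R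
  have h' : f r = f a + f d - (f b + f c) := (sub_eq_of_eq_add' h).symm
  rw [h', map_add, map_sub, map_sub]
  abel

theorem et_rel (m n : ℕ) : et (m + 1) * et n + et (n + 1) * et m =
    et n * et (m + 1) + et m * et (n + 1) + hbar • (et m * et n + et n * et m) := by
  have h := rel_forward _ _ _ _ _ _ (RingQuot.mkAlgHom_rel R (ERelT.current m n))
  simp only [map_add, map_mul, map_smul] at h
  exact h

theorem e_rel (m n : ℤ) : e (m + 1) * e n + e (n + 1) * e m =
    e n * e (m + 1) + e m * e (n + 1) + hbar • (e m * e n + e n * e m) := by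
  have h := rel_forward _ _ _ _ _ _ (RingQuot.mkAlgHom_rel R (ERel.current m n))
  simp only [map_add, map_mul, map_smul] at h
  exact h

section Spanning
variable {A : Type} [Ring A] [Algebra R A]

/-- The word attached to a list. -/
def etw (et : ℕ → A) (l : List ℕ) : A := (l.map et).prod

/-- Span of words of small degree. -/
def VV (et : ℕ → A) (s : ℕ) : Submodule R A := Submodule.span R {x | ∃ l : List ℕ, l.sum < s ∧ x = etw et l}

theorem comm_step (et : ℕ → A)
    (hrel : ∀ m n, et (m + 1) * et n + et (n + 1) * et m =
      et n * et (m + 1) + et m * et (n + 1) + hbar • (et m * et n + et n * et m))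
    (m n : ℕ) :
    (et (m + 1) * et n - et n * et (m + 1)) - (et m * et (n + 1) - et (n + 1) * et m)
      ∈ VV et (m + n + 1) := by
  have h := hrel m n
  have h2 : (et (m + 1) * et n - et n * et (m + 1)) - (et m * et (n + 1) - et (n + 1) * et m) =
      hbar • (et m * et n + et n * et m) := by
    have h' := eq_sub_of_add_eq h
    rw [h']; abel
  rw [h2]
  refine Submodule.smul_mem _ _ (Submodule.add_mem _ ?_ ?_)
  · exact Submodule.subset_span ⟨[m, n], by simp, by simp [etw]⟩
  · exact Submodule.subset_span ⟨[n, m], by simp; omega, by simp [etw]⟩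

theorem comm_base (et : ℕ → A)
    (hrel : ∀ m n, et (m + 1) * et n + et (n + 1) * et m =
      et n * et (m + 1) + et m * et (n + 1) + hbar • (et m * et n + et n * et m))
    (n : ℕ) : ∀ m : ℕ,
    (et m * et n - et n * et m) - (et (m + n) * et 0 - et 0 * et (m + n)) ∈ VV et (m + n) := by
  induction n with
  | zero => intro m; simp
  | succ n ih =>
    intro m
    have h1 := comm_step et hrel m n
    have h2 := ih (m + 1)
    have e : m + 1 + n = m + (n + 1) := by omega
    rw [e] at h2
    have h3 := Submodule.sub_mem _ h2 h1
    convert h3 using 1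
    abel

theorem comm_mem (et : ℕ → A)
    (hrel : ∀ m n, et (m + 1) * et n + et (n + 1) * et m =
      et n * et (m + 1) + et m * et (n + 1) + hbar • (et m * et n + et n * et m))
    (m n : ℕ) : et m * et n - et n * et m ∈ VV et (m + n) := by
  have h1 := comm_base et hrel n m
  have h2 := comm_base et hrel m n
  rw [add_comm n m] at h2
  have h3 := Submodule.sub_mem _ h1 h2
  have h4 : (2 : R) • (et m * et n - et n * et m) ∈ VV et (m + n) := by
    convert h3 using 1
    rw [two_smul]
    abel
  have h5 := Submodule.smul_mem _ (algebraMap ℂ R (1 / 2)) h4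
  rw [smul_smul] at h5
  have h6 : algebraMap ℂ R (1 / 2) * 2 = 1 := by
    rw [show (2 : R) = algebraMap ℂ R 2 from (map_ofNat (algebraMap ℂ R) 2).symm, ← map_mul]
    norm_num
  rwa [h6, one_smul] at h5

theorem VV_mul_left (et : ℕ → A) (a : ℕ) (s : ℕ) (x : A) (hx : x ∈ VV et s) : et a * x ∈ VV et (a + s) := by
  induction hx using Submodule.span_induction with
  | mem x hx =>
    obtain ⟨l, hl, rfl⟩ := hx
    exact Submodule.subset_span ⟨a :: l, by simpa using hl, by simp [etw]⟩
  | zero => simp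
  | add x y _ _ hx hy => rw [mul_add]; exact Submodule.add_mem _ hx hy
  | smul r x _ hx => rw [mul_smul_comm]; exact Submodule.smul_mem _ _ hx

theorem VV_mul_right (et : ℕ → A) (l : List ℕ) (s : ℕ) (x : A) (hx : x ∈ VV et s) :
    x * etw et l ∈ VV et (s + l.sum) := by
  induction hx using Submodule.span_induction with
  | mem x hx =>
    obtain ⟨l', hl, rfl⟩ := hx
    exact Submodule.subset_span ⟨l' ++ l, by simpa using hl, by simp [etw]⟩
  | zero => simp
  | add x y _ _ hx hy => rw [add_mul]; exact Submodule.add_mem _ hx hy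
  | smul r x _ hx => rw [smul_mul_assoc]; exact Submodule.smul_mem _ _ hx

theorem etw_perm (et : ℕ → A)
    (hrel : ∀ m n, et (m + 1) * et n + et (n + 1) * et m =
      et n * et (m + 1) + et m * et (n + 1) + hbar • (et m * et n + et n * et m))
    {l l' : List ℕ} (h : l.Perm l') : etw et l - etw et l' ∈ VV et l.sum := by
  induction h with
  | nil => simp
  | cons a h ih =>
    have := VV_mul_left et a _ _ ih
    simpa [etw, mul_sub] using this
  | swap a b l =>
    have := VV_mul_right et l _ _ (comm_mem et hrel b a)
    simpa [etw, sub_mul, mul_assoc, add_assoc] using this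
  | trans h1 h2 ih1 ih2 =>
    rw [← h1.sum_eq] at ih2
    have := Submodule.add_mem _ ih1 ih2
    simpa using this

theorem etw_mem (et : ℕ → A)
    (hrel : ∀ m n, et (m + 1) * et n + et (n + 1) * et m =
      et n * et (m + 1) + et m * et (n + 1) + hbar • (et m * et n + et n * et m))
    (s : ℕ) : ∀ l : List ℕ, l.sum = s →
    etw et l ∈ Submodule.span R (Set.range fun m : Multiset ℕ => etw et m.toList) := by
  induction s using Nat.strong_induction_on with
  | _ s ih =>
    intro l hl
    have hp : l.Perm (l : Multiset ℕ).toList := Multiset.coe_eq_coe.mp (by simp)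
    have h1 := etw_perm et hrel hp
    have h2 : VV et l.sum ≤ Submodule.span R (Set.range fun m : Multiset ℕ => etw et m.toList) := by
      refine Submodule.span_le.mpr ?_
      rintro _ ⟨l', hl', rfl⟩
      exact ih l'.sum (hl ▸ hl') l' rfl
    have h3 := Submodule.add_mem _ (h2 h1)
      (Submodule.subset_span (R := R) ⟨(l : Multiset ℕ), rfl⟩)
    simpa using h3

end Spanning

/-- Words in `Ut`. -/
def etu (l : List ℕ) : Ut := (l.map et).prod

theorem etu_mem (l : List ℕ) :
    etu l ∈ Submodule.span R (Set.range fun m : Multiset ℕ => etu m.toList) :=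
  @etw_mem Ut (Algebra.semiringToRing R) _ et et_rel _ l rfl

theorem Ut_span (x : Ut) :
    x ∈ Submodule.span R (Set.range fun m : Multiset ℕ => etu m.toList) := by
  obtain ⟨y, rfl⟩ := RingQuot.mkAlgHom_surjective R ERelT x
  have hy : y ∈ Submodule.span R (Set.range fun l : List ℕ => (l.map (FreeAlgebra.ι R)).prod) := by
    rw [span_words]; trivial
  induction hy using Submodule.span_induction with
  | mem x hx =>
    obtain ⟨l, rfl⟩ := hx
    have : RingQuot.mkAlgHom R ERelT ((l.map (FreeAlgebra.ι R)).prod) = etu l := by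
      rw [map_list_prod, List.map_map]; rfl
    simp only [this]
    exact etu_mem l
  | zero => simp
  | add x y _ _ hx hy => rw [map_add]; exact Submodule.add_mem _ hx hy
  | smul r x _ hx => rw [map_smul]; exact Submodule.smul_mem _ _ hx

/-- The algebra morphism. -/
def phiHom : Ut →ₐ[R] U :=
  RingQuot.liftAlgHom R ⟨FreeAlgebra.lift R (fun n : ℕ => e (n : ℤ)), by
    rintro _ _ ⟨m, n⟩
    apply rel_backward
    have h := e_rel m n
    simpa only [map_add, map_mul, map_smul, Et, FreeAlgebra.lift_ι_apply, Nat.cast_add,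
      Nat.cast_one] using h⟩

theorem phiHom_et (n : ℕ) : phiHom (et n) = e (n : ℤ) := by
  simp [phiHom, et, Et]

theorem phiHom_etu (l : List ℕ) :
    phiHom (etu l) = RingQuot.mkAlgHom R ERel (Ew (l.map fun n : ℕ => (n : ℤ))) := by
  rw [etu, Ew, map_list_prod, map_list_prod, List.map_map, List.map_map, List.map_map]
  congr 1
  refine List.map_congr_left fun n _ => ?_
  simp only [Function.comp_apply, phiHom_et]
  rfl

theorem phiHom_injective : Function.Injective phiHom := by
  rw [injective_iff_map_eq_zero]
  intro x hx
  obtain ⟨c, rfl⟩ := (Finsupp.mem_span_range_iff_exists_finsupp).mp (Ut_span x)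
  have h0 : RingQuot.mkAlgHom R ERel (c.sum fun m r => r • Ew (exm m)) = 0 := by
    rw [← hx]
    simp only [Finsupp.sum, map_sum, map_smul, phiHom_etu]
    rfl
  have hc : c = 0 := by
    apply indep
    intro k
    have h := Phi_eq_zero k _ h0
    simpa only [Finsupp.sum, map_sum, map_smul, Phi_word, exm_length] using h
  simp [hc]

theorem phiHom_range : phiHom.range = Uge := by
  have h : (⊤ : Subalgebra R Ut) = Algebra.adjoin R (Set.range et) := by
    have h1 : (⊤ : Subalgebra R Ut) = (⊤ : Subalgebra R (FreeAlgebra R ℕ)).map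
        (RingQuot.mkAlgHom R ERelT) := by
      rw [Algebra.map_top, eq_comm, AlgHom.range_eq_top]
      exact RingQuot.mkAlgHom_surjective R ERelT
    rw [h1, ← FreeAlgebra.adjoin_range_ι, AlgHom.map_adjoin, ← Set.range_comp]
    rfl
  rw [← Algebra.map_top, h, AlgHom.map_adjoin, ← Set.range_comp, Uge]
  congr 2
  ext n
  exact phiHom_et n


/-- the `R`-algebra morphism `Ũ^{≥0} → U` determined by `ẽ_n ↦ e_n`
is injective, and its image is the subalgebra `U^{≥0}`; i.e. the above relations are
defining relations for `U^{≥0}`. -/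
theorem exists_algHom_tilde_injective_range_eq :
    ∃ φ : Ut →ₐ[R] U, (∀ n : ℕ, φ (et n) = e (n : ℤ)) ∧
      Function.Injective φ ∧ φ.range = Uge := by
  exact ⟨phiHom, phiHom_et, phiHom_injective, phiHom_range⟩

end
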